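/- Let D_X > 0 and suppose some channel k* ∈ ℛ_X(D_X;X) attains the minimal induced intermediate distortion D_Y^min = min 𝒟*_Y(D_X;X). Then the minimal achievable rate of distilling the intermediate layer directly is upper-bounded by the input rate-distortion function: R_X(D_Y^min;Y) ≤ R_X(D_X;X). -/

import Mathlib

open scoped BigOperators

/-- Joint distribution P(a,b) = p(a)·k(a)(b) induced by a source `p` and a channel `k`,
as a real number. -/
noncomputable def jointP {A B : Type*} [Fintype A] [Fintype B] (p : PMF A) (k : A → PMF B)
    (a : A) (b : B) : ℝ :=
  (p a * k a b).toReal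

/-- Marginal distribution of the second coordinate of the joint induced by `(p, k)`. -/
noncomputable def margSnd {A B : Type*} [Fintype A] [Fintype B] (p : PMF A) (k : A → PMF B)
    (b : B) : ℝ :=
  ∑ a, jointP p k a b

/-- Mutual information I(A;B) = ∑_{a,b} P(a,b)·log(P(a,b)/(P(a)·P(b))) of the joint
induced by `(p, k)`; the convention 0·log 0 = 0 holds automatically in Lean. -/
noncomputable def mutualInfo {A B : Type*} [Fintype A] [Fintype B] (p : PMF A)
    (k : A → PMF B) : ℝ :=
  ∑ a, ∑ b, jointP p k a b * Real.log (jointP p k a b / ((p a).toReal * margSnd p k b))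

/-- Expected distortion E[d(A,B)] under the joint induced by `(p, k)`. -/
noncomputable def expDist {A B : Type*} [Fintype A] [Fintype B] (p : PMF A) (k : A → PMF B)
    (d : A → B → ℝ) : ℝ :=
  ∑ a, ∑ b, jointP p k a b * d a b

/-- Rate-distortion function: infimum of mutual information over all channels `A → PMF B`
meeting the expected-distortion constraint `≤ D`. -/
noncomputable def rate {A B : Type*} [Fintype A] [Fintype B] (p : PMF A) (d : A → B → ℝ)
    (D : ℝ) : ℝ :=
  sInf { r : ℝ | ∃ k : A → PMF B, expDist p k d ≤ D ∧ r = mutualInfo p k }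

/-- Conditional probability P(A = a | B = b) under the joint induced by `(p, k)`. -/
noncomputable def condProb {A B : Type*} [Fintype A] [Fintype B] (p : PMF A) (k : A → PMF B)
    (a : A) (b : B) : ℝ :=
  jointP p k a b / margSnd p k b

theorem jointP_nonneg {A B : Type*} [Fintype A] [Fintype B] (p : PMF A) (k : A → PMF B)
    (a : A) (b : B) : 0 ≤ jointP p k a b :=
  ENNReal.toReal_nonneg

theorem margSnd_nonneg {A B : Type*} [Fintype A] [Fintype B] (p : PMF A) (k : A → PMF B)
    (b : B) : 0 ≤ margSnd p k b :=
  Finset.sum_nonneg fun a _ => jointP_nonneg p k a b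

theorem PMF.sum_toReal_eq_one {A : Type*} [Fintype A] (p : PMF A) :
    ∑ a, (p a).toReal = 1 := by
  rw [← ENNReal.toReal_sum fun a _ => p.apply_ne_top a, ← tsum_fintype (L := .unconditional A),
    p.tsum_coe, ENNReal.toReal_one]

theorem sum_jointP {A B : Type*} [Fintype A] [Fintype B] (p : PMF A) (k : A → PMF B) :
    ∑ a, ∑ b, jointP p k a b = 1 := by
  simp only [jointP, ENNReal.toReal_mul, ← Finset.mul_sum, PMF.sum_toReal_eq_one, mul_one]

theorem sum_margSnd {A B : Type*} [Fintype A] [Fintype B] (p : PMF A) (k : A → PMF B) :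
    ∑ b, margSnd p k b = 1 := by
  simp only [margSnd]
  rw [Finset.sum_comm, sum_jointP]

theorem sub_le_mul_log_div {x y : ℝ} (hx : 0 ≤ x) (hy : 0 ≤ y) (hxy : y = 0 → x = 0) :
    x - y ≤ x * Real.log (x / y) := by
  rcases hx.eq_or_lt with rfl | hx
  · simpa using hy
  · have hy : 0 < y := hy.lt_of_ne fun h => hx.ne' (hxy h.symm)
    calc x - y = x * (1 - (x / y)⁻¹) := by field_simp
      _ ≤ x * Real.log (x / y) :=
        mul_le_mul_of_nonneg_left (Real.one_sub_inv_le_log_of_pos (div_pos hx hy)) hx.le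

theorem jointP_eq_zero_of_marginals_mul_eq_zero {A B : Type*} [Fintype A] [Fintype B]
    (p : PMF A) (k : A → PMF B) (a : A) (b : B) (h : (p a).toReal * margSnd p k b = 0) :
    jointP p k a b = 0 := by
  rcases mul_eq_zero.mp h with h | h
  · rw [jointP, ENNReal.toReal_mul, h, zero_mul]
  · exact (Finset.sum_eq_zero_iff_of_nonneg fun a _ => jointP_nonneg p k a b).mp h a
      (Finset.mem_univ a)

/-- Gibbs' inequality for the joint distribution against the product of its marginals. -/
theorem mutualInfo_nonneg {A B : Type*} [Fintype A] [Fintype B] (p : PMF A) (k : A → PMF B) :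
    0 ≤ mutualInfo p k := by
  calc (0 : ℝ) = ∑ a, ∑ b, (jointP p k a b - (p a).toReal * margSnd p k b) := by
        simp only [Finset.sum_sub_distrib, ← Finset.mul_sum, sum_jointP, sum_margSnd, mul_one,
          PMF.sum_toReal_eq_one, sub_self]
    _ ≤ mutualInfo p k := Finset.sum_le_sum fun a _ => Finset.sum_le_sum fun b _ =>
        sub_le_mul_log_div (jointP_nonneg p k a b)
          (mul_nonneg ENNReal.toReal_nonneg (margSnd_nonneg p k b))
          (jointP_eq_zero_of_marginals_mul_eq_zero p k a b)

theorem rate_le_mutualInfo {A B : Type*} [Fintype A] [Fintype B] (p : PMF A) {d : A → B → ℝ}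
    {D : ℝ} {k : A → PMF B} (hk : expDist p k d ≤ D) : rate p d D ≤ mutualInfo p k :=
  csInf_le ⟨0, by rintro _ ⟨k, -, rfl⟩; exact mutualInfo_nonneg p k⟩ ⟨k, hk, rfl⟩

/-- If some X-optimal channel k* attains the minimal induced intermediate
distortion D_Y^min = min 𝒟*_Y(D_X;X), then R_X(D_Y^min;Y) ≤ R_X(D_X;X). -/
theorem distill_le_input_rd
    {𝒳 𝒴 : Type*} [Fintype 𝒳] [Fintype 𝒴] [Nonempty 𝒳] [Nonempty 𝒴]
    (pX : PMF 𝒳) (g : 𝒳 → 𝒴)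
    (dX : 𝒳 → 𝒳 → ℝ) (hdX : ∀ x x', 0 ≤ dX x x')
    (dY : 𝒴 → 𝒴 → ℝ) (hdY : ∀ y y', 0 ≤ dY y y')
    (DX : ℝ) (hDX : 0 < DX)
    (kstar : 𝒳 → PMF 𝒳)
    (hk_dist : expDist pX kstar dX ≤ DX)
    (hk_rate : mutualInfo pX kstar = rate pX dX DX)
    (DYmin : ℝ)
    (hattain : DYmin = expDist pX kstar (fun x xhat => dY (g x) (g xhat)))
    (hmin : ∀ k : 𝒳 → PMF 𝒳, expDist pX k dX ≤ DX →
      mutualInfo pX k = rate pX dX DX →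
      DYmin ≤ expDist pX k (fun x xhat => dY (g x) (g xhat))) :
    rate pX (fun x xhat => dY (g x) (g xhat)) DYmin ≤ rate pX dX DX := by
  rw [← hk_rate]
  exact rate_le_mutualInfo pX hattain.ge
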